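/- Let G be a finite simple connected graph on n vertices. If the LCM lattice of the edge ideal I(G) is graded, then its maximal rank equals n − 1; moreover if G is not gap-free then L_{I(G)} contains a saturated chain from bottom to top of length n − 2, so L_{I(G)} is not graded. -/

import Mathlib

/-- A finset of vertices is a union of edges of `G` if every vertex in it has a
neighbor in it. -/
def IsUnionOfEdges {V : Type*} (G : SimpleGraph V) (S : Finset V) : Prop :=
  ∀ v ∈ S, ∃ w ∈ S, G.Adj v w

/-- The LCM lattice of the edge ideal `I(G)`, ordered by inclusion; the bottom element
is `∅` and (for `G` with no isolated vertices) the top element is `univ`. -/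
abbrev EdgeLcmLattice {V : Type*} (G : SimpleGraph V) : Type _ :=
  {S : Finset V // IsUnionOfEdges G S}

/-- A finite lattice is graded if there is an order-preserving `ρ` increasing by
exactly 1 along covers. -/
def IsGradedOrder (L : Type*) [Preorder L] : Prop :=
  ∃ ρ : L → ℤ, (∀ x y : L, x < y → ρ x < ρ y) ∧ ∀ x y : L, x ⋖ y → ρ y = ρ x + 1

/-- `G` is gap-free: no induced subgraph consisting of two disjoint edges. -/
def GapFree {V : Type*} (G : SimpleGraph V) : Prop :=
  ¬ ∃ a b c d : V, G.Adj a b ∧ G.Adj c d ∧ a ≠ c ∧ a ≠ d ∧ b ≠ c ∧ b ≠ d ∧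
    ¬ G.Adj a c ∧ ¬ G.Adj a d ∧ ¬ G.Adj b c ∧ ¬ G.Adj b d

/-- There is a saturated chain of length `k` from `x` to `y`. -/
def SatChain {L : Type*} [Preorder L] (k : ℕ) (x y : L) : Prop :=
  ∃ f : ℕ → L, f 0 = x ∧ f k = y ∧ ∀ i < k, f i ⋖ f (i + 1)

theorem SatChain.cons {L : Type*} [Preorder L] {k : ℕ} {x y z : L} (h : x ⋖ y)
    (hc : SatChain k y z) : SatChain (k + 1) x z := by
  obtain ⟨f, h0, hk, hf⟩ := hc
  refine ⟨fun i => Nat.casesOn i x f, rfl, hk, ?_⟩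
  intro i hi
  cases i with
  | zero => simpa [h0] using h
  | succ i => exact hf i (by omega)

theorem SatChain.rank {L : Type*} [Preorder L] {k : ℕ} {x y : L} (hc : SatChain k x y)
    (ρ : L → ℤ) (hρ : ∀ x y : L, x ⋖ y → ρ y = ρ x + 1) : ρ y - ρ x = k := by
  obtain ⟨f, rfl, rfl, hf⟩ := hc
  have : ∀ j ≤ k, ρ (f j) - ρ (f 0) = j := by
    intro j
    induction j with
    | zero => simp
    | succ j ih =>
      intro hj
      have h1 := ih (by omega)
      have h2 := hρ _ _ (hf j (by omega))
      push_cast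
      linarith
  exact this k le_rfl

theorem exists_adj_of_ne_univ {V : Type*} [Fintype V] [DecidableEq V]
    (G : SimpleGraph V) (hconn : G.Connected) (S : Finset V) (hS : S.Nonempty)
    (hne : S ≠ Finset.univ) : ∃ v ∈ S, ∃ w, w ∉ S ∧ G.Adj v w := by
  by_contra hcon
  push Not at hcon
  apply hne
  obtain ⟨a, ha⟩ := hS
  ext b
  simp only [Finset.mem_univ, iff_true]
  obtain ⟨p⟩ := hconn.preconnected a b
  induction p with
  | nil => exact ha
  | cons h p ih =>
    apply ih
    by_contra hv
    exact hcon _ ha _ hv h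

theorem chain_to_top {V : Type*} [Fintype V] [DecidableEq V]
    (G : SimpleGraph V) (hconn : G.Connected) (top : EdgeLcmLattice G)
    (htop : (top : Finset V) = Finset.univ) (k : ℕ) :
    ∀ x : EdgeLcmLattice G, (x : Finset V).Nonempty →
      (x : Finset V).card + k = Fintype.card V → SatChain k x top := by
  induction k with
  | zero =>
    intro x _ hx
    have : x = top := by
      apply Subtype.ext
      rw [htop]
      exact (Finset.card_eq_iff_eq_univ _).1 (by simpa using hx)
    exact ⟨fun _ => x, rfl, this, by simp⟩
  | succ k ih =>
    intro x hne hx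
    have hnu : (x : Finset V) ≠ Finset.univ := by
      intro h
      rw [h, Finset.card_univ] at hx
      omega
    obtain ⟨v, hv, w, hw, hvw⟩ := exists_adj_of_ne_univ G hconn _ hne hnu
    let y : EdgeLcmLattice G := ⟨insert w x.1, by
      intro u hu
      rcases Finset.mem_insert.1 hu with rfl | hu
      · exact ⟨v, Finset.mem_insert_of_mem hv, hvw.symm⟩
      · obtain ⟨t, ht, hut⟩ := x.2 u hu
        exact ⟨t, Finset.mem_insert_of_mem ht, hut⟩⟩
    have hcov : x.1 ⋖ y.1 := Finset.covBy_insert hw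
    refine SatChain.cons (y := y) ⟨hcov.1, fun z h1 h2 => hcov.2 (c := z.1) h1 h2⟩
      (ih y (Finset.insert_nonempty _ _) ?_)
    change (insert w x.1).card + k = _
    rw [Finset.card_insert_of_notMem hw]
    omega

/-- The element of the lattice given by an edge. -/
def edgeElt {V : Type*} [DecidableEq V] (G : SimpleGraph V) {a b : V} (h : G.Adj a b) :
    EdgeLcmLattice G :=
  ⟨{a, b}, by
    intro u hu
    rcases Finset.mem_insert.1 hu with rfl | hu
    · exact ⟨b, by simp, h⟩
    · rw [Finset.mem_singleton.1 hu]
      exact ⟨a, by simp, h.symm⟩⟩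

theorem bot_covBy_edge {V : Type*} [DecidableEq V] (G : SimpleGraph V) {a b : V}
    (h : G.Adj a b) (bot : EdgeLcmLattice G) (hbot : (bot : Finset V) = ∅) :
    bot ⋖ edgeElt G h := by
  constructor
  · change bot.1 < {a, b}
    rw [hbot, Finset.lt_iff_ssubset, Finset.empty_ssubset]
    simp
  · intro z h1 h2
    have h1 : bot.1 ⊂ z.1 := h1
    have h2 : z.1 ⊂ {a, b} := h2
    rw [hbot, Finset.empty_ssubset] at h1
    obtain ⟨v, hv⟩ := h1
    obtain ⟨w, hw, hvw⟩ := z.2 v hv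
    apply h2.2
    have e1 := h2.1 hv
    have e2 := h2.1 hw
    have := hvw.ne
    simp only [Finset.mem_insert, Finset.mem_singleton] at e1 e2
    intro u hu
    simp only [Finset.mem_insert, Finset.mem_singleton] at hu
    grind

/-- The element of the lattice given by two edges. -/
def edgeElt2 {V : Type*} [DecidableEq V] (G : SimpleGraph V) {a b c d : V} (h : G.Adj a b)
    (h' : G.Adj c d) : EdgeLcmLattice G :=
  ⟨{a, b, c, d}, by
    intro u hu
    simp only [Finset.mem_insert, Finset.mem_singleton] at hu
    rcases hu with rfl | rfl | rfl | rfl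
    · exact ⟨b, by simp, h⟩
    · exact ⟨a, by simp, h.symm⟩
    · exact ⟨d, by simp, h'⟩
    · exact ⟨c, by simp, h'.symm⟩⟩

theorem edge_covBy_gap {V : Type*} [DecidableEq V] (G : SimpleGraph V) {a b c d : V}
    (h : G.Adj a b) (h' : G.Adj c d) (h1 : a ≠ c) (h3 : b ≠ c)
    (n1 : ¬ G.Adj a c) (n2 : ¬ G.Adj a d) (n3 : ¬ G.Adj b c)
    (n4 : ¬ G.Adj b d) : edgeElt G h ⋖ edgeElt2 G h h' := by
  constructor
  · change ({a, b} : Finset V) ⊂ {a, b, c, d}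
    rw [Finset.ssubset_iff_of_subset (by intro u; simp; tauto)]
    exact ⟨c, by simp, by simp [h1.symm, h3.symm]⟩
  · intro z k1 k2
    have k1 : {a, b} ⊂ z.1 := k1
    have k2 : z.1 ⊂ {a, b, c, d} := k2
    have ha : a ∈ z.1 := k1.1 (by simp)
    have hb : b ∈ z.1 := k1.1 (by simp)
    obtain ⟨v, hv, hvn⟩ := Finset.exists_of_ssubset k1
    obtain ⟨w, hw, hvw⟩ := z.2 v hv
    apply k2.2
    have e1 := k2.1 hv
    have e2 := k2.1 hw
    have e3 := hvw.ne
    have e4 := hvw.symm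
    simp only [Finset.mem_insert, Finset.mem_singleton] at e1 e2 hvn
    intro u hu
    simp only [Finset.mem_insert, Finset.mem_singleton] at hu
    grind

/-- For a connected nontrivial graph on `n` vertices: if the LCM lattice of `I(G)` is
graded then its maximal rank is `n - 1` (any rank function increases by `n - 1` from
bottom to top); moreover, if `G` is not gap-free then the LCM lattice has a saturated
chain of length `n - 2` from bottom to top, and hence is not graded. -/
theorem graded_rank_and_not_graded_of_gap {V : Type*} [Fintype V] [DecidableEq V]
    (G : SimpleGraph V) (hconn : G.Connected) (hnt : ∃ a b : V, G.Adj a b)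
    (n : ℕ) (hn : n = Fintype.card V)
    (bot top : EdgeLcmLattice G)
    (hbot : (bot : Finset V) = ∅) (htop : (top : Finset V) = Finset.univ) :
    (∀ ρ : EdgeLcmLattice G → ℤ,
        (∀ x y : EdgeLcmLattice G, x < y → ρ x < ρ y) →
        (∀ x y : EdgeLcmLattice G, x ⋖ y → ρ y = ρ x + 1) →
        ρ top - ρ bot = (n : ℤ) - 1) ∧
    (¬ GapFree G →
      (∃ f : ℕ → EdgeLcmLattice G, f 0 = bot ∧ f (n - 2) = top ∧
        ∀ i < n - 2, f i ⋖ f (i + 1)) ∧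
      ¬ IsGradedOrder (EdgeLcmLattice G)) := by
  have hchain1 : SatChain (n - 1) bot top := by
    obtain ⟨a, b, hab⟩ := hnt
    have hc : (edgeElt G hab).1.card = 2 := Finset.card_pair hab.ne
    have hle : (edgeElt G hab).1.card ≤ Fintype.card V := Finset.card_le_univ _
    have h := SatChain.cons (bot_covBy_edge G hab bot hbot)
      (chain_to_top G hconn top htop (n - 2) (edgeElt G hab) ⟨a, by simp [edgeElt]⟩ (by omega))
    rwa [show n - 2 + 1 = n - 1 by omega] at h
  have hn2 : 2 ≤ n := by
    obtain ⟨a, b, hab⟩ := hnt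
    have := Finset.card_le_univ ({a, b} : Finset V)
    rw [Finset.card_pair hab.ne] at this
    omega
  have hrank : ∀ ρ : EdgeLcmLattice G → ℤ,
      (∀ x y : EdgeLcmLattice G, x ⋖ y → ρ y = ρ x + 1) →
      ρ top - ρ bot = (n : ℤ) - 1 := by
    intro ρ hρ
    rw [hchain1.rank ρ hρ]
    omega
  refine ⟨fun ρ _ hρ => hrank ρ hρ, fun hgap => ?_⟩
  have hchain2 : SatChain (n - 2) bot top := by
    simp only [GapFree, not_not] at hgap
    obtain ⟨a, b, c, d, hab, hcd, h1, h2, h3, h4, n1, n2, n3, n4⟩ := hgap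
    have hc : (edgeElt2 G hab hcd).1.card = 4 := by
      have e1 := hab.ne
      have e2 := hcd.ne
      simp [edgeElt2, *]
    have hle : (edgeElt2 G hab hcd).1.card ≤ Fintype.card V := Finset.card_le_univ _
    have h := SatChain.cons (bot_covBy_edge G hab bot hbot)
      (SatChain.cons (edge_covBy_gap G hab hcd h1 h3 n1 n2 n3 n4)
      (chain_to_top G hconn top htop (n - 4) (edgeElt2 G hab hcd) ⟨a, by simp [edgeElt2]⟩
        (by omega)))
    rwa [show n - 4 + 1 + 1 = n - 2 by omega] at h
  refine ⟨hchain2, ?_⟩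
  rintro ⟨ρ, _, hρ⟩
  have r1 := hrank ρ hρ
  have r2 := hchain2.rank ρ hρ
  omega
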